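/- arXiv:2307.09581 — 2 statements merged into one kernel-verified Lean document; each statement's English description precedes it below -/
import Mathlib

section
/- For every n ≥ 1, the recurrence coefficients of the truncated Laguerre polynomials satisfy the nonlinear relation (α − b_n + 2n + 1)·(α − b_{n−1} + 2n − 1)·a_n = (1/4)·[a_n − a_{n+1} − b_n·(b_n − (z + α + 2(n+1))) − (1 + α + 2n)·z]². -/
open MeasureTheory intervalIntegral Polynomial

/-!
Integrating `(x ^ (α + 1) * exp (-x) * p)'` over `[0, z]` shows that the truncated Laguerre
functional `L` satisfies the Pearson equation `L (x p') = L (x p) - (α + 1) L p + c p(z)`, where the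
upper endpoint contributes the point mass `c = z ^ (α + 1) * exp (-z)`. Applied to `p = Pₙ²` and
`p = Pₙ₊₁ Pₙ`, the equation expresses `c Pₙ(z)²` and `c Pₙ₊₁(z) Pₙ(z)` through the recurrence
coefficients, the subleading coefficients and the squared norms `L (Pₙ²)`. Evaluating the three-term
recurrence at `z` eliminates the subleading coefficients, and the relation is then the identity
`(c Pₙ(z)²) (c Pₙ₊₁(z)²) = (c Pₙ₊₁(z) Pₙ(z))²`.
-/

section CommRing

variable {R : Type*} [CommRing R]

lemma coeff_X_mul_derivative (p : R[X]) (n : ℕ) :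
    (X * derivative p).coeff n = n * p.coeff n := by
  cases n with
  | zero => simp
  | succ n => rw [coeff_X_mul, coeff_derivative, mul_comm, Nat.cast_succ]

lemma natDegree_X_mul_derivative_le (p : R[X]) : (X * derivative p).natDegree ≤ p.natDegree :=
  natDegree_le_iff_coeff_eq_zero.mpr fun n hn => by
    rw [coeff_X_mul_derivative, coeff_eq_zero_of_natDegree_lt hn, mul_zero]

lemma degree_sub_C_coeff_mul_lt {p q : R[X]} {n : ℕ} (hp : p.Monic) (hpn : p.natDegree = n)
    (hq : q.natDegree ≤ n) : (q - C (q.coeff n) * p).degree < n := by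
  subst hpn
  refine (degree_lt_iff_coeff_zero _ _).mpr fun m hm => ?_
  rw [coeff_sub, coeff_C_mul]
  rcases hm.eq_or_lt with rfl | hm
  · rw [hp.coeff_natDegree, mul_one, sub_self]
  · rw [coeff_eq_zero_of_natDegree_lt hm, coeff_eq_zero_of_natDegree_lt (hq.trans_lt hm),
      mul_zero, sub_zero]

lemma map_C_mul (L : R[X] →ₗ[R] R) (r : R) (p : R[X]) : L (C r * p) = r * L p := by
  rw [← smul_eq_C_mul, map_smul, smul_eq_mul]

/-- `P` is a sequence of monic orthogonal polynomials for the linear functional `L`, with `P n` of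
degree `n`. The squared norms `L (P n ^ 2)` are allowed to vanish. -/
structure IsMonicOrthogonal (L : R[X] →ₗ[R] R) (P : ℕ → R[X]) : Prop where
  monic (n : ℕ) : (P n).Monic
  natDegree_eq (n : ℕ) : (P n).natDegree = n
  map_mul_eq_zero {m n : ℕ} : m ≠ n → L (P m * P n) = 0

/-- The three-term recurrence of a sequence of monic orthogonal polynomials with coefficients
`a` and `b`. The initial equation is separate because `P (-1) = 0` has no index in `ℕ`; the value
`a 0` does not occur. -/
structure HasThreeTermRecurrence (P : ℕ → R[X]) (a b : ℕ → R) : Prop where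
  zero : X * P 0 = P 1 + C (b 0) * P 0
  succ (n : ℕ) : X * P (n + 1) = P (n + 2) + C (b (n + 1)) * P (n + 1) + C (a (n + 1)) * P n

/-- The Pearson equation `(x L)' = (α + 1 - x) L - c δ_z` of a Laguerre functional with a point
mass in its derivative, expressed by its action on a polynomial `p`. -/
def LaguerrePearson (L : R[X] →ₗ[R] R) (α z c : R) : Prop :=
  ∀ p : R[X], L (X * derivative p) = L (X * p) - (α + 1) * L p + c * p.eval z

variable {L : R[X] →ₗ[R] R} {P : ℕ → R[X]} {a b : ℕ → R} {α z c : R}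

namespace IsMonicOrthogonal

lemma coeff_self (hP : IsMonicOrthogonal L P) (n : ℕ) : (P n).coeff n = 1 := by
  simpa only [hP.natDegree_eq] using (hP.monic n).coeff_natDegree

lemma coeff_eq_zero (hP : IsMonicOrthogonal L P) {m n : ℕ} (hmn : m < n) : (P m).coeff n = 0 :=
  coeff_eq_zero_of_natDegree_lt (by rwa [hP.natDegree_eq])

lemma map_mul_eq_zero_of_degree_lt (hP : IsMonicOrthogonal L P) {n : ℕ} {q : R[X]}
    (hq : q.degree < n) : L (P n * q) = 0 := by
  nontriviality R
  let S : Polynomial.Sequence R :=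
    ⟨P, fun i => by rw [degree_eq_natDegree (hP.monic i).ne_zero, hP.natDegree_eq]⟩
  have hspan : q ∈ Submodule.span R (S '' Set.Iio n) := by
    rw [S.span_degreeLT fun i _ => (hP.monic i).leadingCoeff ▸ isUnit_one]
    exact mem_degreeLT.mpr hq
  suffices Submodule.span R (S '' Set.Iio n) ≤ (L ∘ₗ LinearMap.mulLeft R (P n)).ker from this hspan
  rw [Submodule.span_le]
  rintro _ ⟨i, hi, rfl⟩
  exact hP.map_mul_eq_zero (ne_of_gt hi)

lemma map_mul_of_natDegree_le (hP : IsMonicOrthogonal L P) {n : ℕ} {q : R[X]}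
    (hq : q.natDegree ≤ n) : L (P n * q) = q.coeff n * L (P n ^ 2) := by
  have hlow : L (P n * (q - C (q.coeff n) * P n)) = 0 :=
    hP.map_mul_eq_zero_of_degree_lt
      (degree_sub_C_coeff_mul_lt (hP.monic n) (hP.natDegree_eq n) hq)
  rw [mul_sub, mul_left_comm, map_sub, map_C_mul, ← sq] at hlow
  exact sub_eq_zero.mp hlow

lemma map_mul_of_natDegree_le_succ (hP : IsMonicOrthogonal L P) {n : ℕ} {q : R[X]}
    (hq : q.natDegree ≤ n + 1) :
    L (P n * q) = (q.coeff n - q.coeff (n + 1) * (P (n + 1)).coeff n) * L (P n ^ 2) := by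
  set r := q - C (q.coeff (n + 1)) * P (n + 1) with hr
  have hdeg : r.natDegree ≤ n :=
    natDegree_le_iff_coeff_eq_zero.mpr <| (degree_lt_iff_coeff_zero r (n + 1)).mp <|
      degree_sub_C_coeff_mul_lt (hP.monic (n + 1)) (hP.natDegree_eq (n + 1)) hq
  calc L (P n * q) = L (P n * r) + q.coeff (n + 1) * L (P n * P (n + 1)) := by
        rw [← map_C_mul, ← map_add, hr]; congr 1; ring
    _ = r.coeff n * L (P n ^ 2) := by
        rw [hP.map_mul_eq_zero n.lt_succ_self.ne, hP.map_mul_of_natDegree_le hdeg, mul_zero,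
          add_zero]
    _ = _ := by rw [hr, coeff_sub, coeff_C_mul]

lemma map_succ_mul_X_mul (hP : IsMonicOrthogonal L P) (n : ℕ) :
    L (P (n + 1) * (X * P n)) = L (P (n + 1) ^ 2) := by
  have hdeg : (X * P n).natDegree ≤ n + 1 := by
    rw [add_comm]; exact natDegree_mul_le_of_le natDegree_X_le (hP.natDegree_eq n).le
  rw [hP.map_mul_of_natDegree_le hdeg, coeff_X_mul, hP.coeff_self, one_mul]

lemma map_X_mul_sq (hP : IsMonicOrthogonal L P) (hrec : HasThreeTermRecurrence P a b) (n : ℕ) :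
    L (X * P n ^ 2) = b n * L (P n ^ 2) := by
  rw [sq, mul_left_comm]
  cases n with
  | zero =>
    rw [hrec.zero, mul_add, mul_left_comm, map_add, map_C_mul, hP.map_mul_eq_zero zero_ne_one,
      zero_add]
  | succ n =>
    rw [hrec.succ, mul_add, mul_add, mul_left_comm _ (C _), mul_left_comm _ (C _), map_add,
      map_add, map_C_mul, map_C_mul, hP.map_mul_eq_zero (n + 1).lt_succ_self.ne,
      hP.map_mul_eq_zero n.succ_ne_self, zero_add, mul_zero, add_zero]

lemma map_sq_succ (hP : IsMonicOrthogonal L P) (hrec : HasThreeTermRecurrence P a b) (n : ℕ) :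
    L (P (n + 1) ^ 2) = a (n + 1) * L (P n ^ 2) := by
  rw [← hP.map_succ_mul_X_mul, mul_left_comm, ← mul_assoc, mul_comm, hrec.succ, mul_add, mul_add,
    mul_left_comm _ (C _), mul_left_comm _ (C _), map_add, map_add, map_C_mul, map_C_mul,
    hP.map_mul_eq_zero (by omega), hP.map_mul_eq_zero n.lt_succ_self.ne, mul_zero, zero_add,
    zero_add, sq]

lemma coeff_succ_succ (hP : IsMonicOrthogonal L P) (hrec : HasThreeTermRecurrence P a b)
    (n : ℕ) : (P (n + 2)).coeff (n + 1) = (P (n + 1)).coeff n - b (n + 1) := by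
  have hcoeff := congrArg (coeff · (n + 1)) (hrec.succ n)
  simp only [coeff_X_mul, coeff_add, coeff_C_mul, hP.coeff_self,
    hP.coeff_eq_zero n.lt_succ_self] at hcoeff
  linear_combination -hcoeff

lemma mass_mul_eval_sq (hP : IsMonicOrthogonal L P) (hrec : HasThreeTermRecurrence P a b)
    (hL : LaguerrePearson L α z c) (n : ℕ) :
    c * (P n).eval z ^ 2 = (α - b n + 2 * n + 1) * L (P n ^ 2) := by
  have hderiv : L (X * derivative (P n ^ 2)) = 2 * (n * L (P n ^ 2)) := by
    have hdeg := (natDegree_X_mul_derivative_le (P n)).trans_eq (hP.natDegree_eq n)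
    calc L (X * derivative (P n ^ 2)) = L (C 2 * (P n * (X * derivative (P n)))) := by
          rw [derivative_sq]; congr 1; ring
      _ = 2 * (n * L (P n ^ 2)) := by
          rw [map_C_mul, hP.map_mul_of_natDegree_le hdeg, coeff_X_mul_derivative, hP.coeff_self,
            mul_one]
  have hpearson := hL (P n ^ 2)
  rw [hderiv, hP.map_X_mul_sq hrec, eval_pow] at hpearson
  linear_combination -hpearson

lemma mass_mul_eval_succ_mul_eval (hP : IsMonicOrthogonal L P) (hL : LaguerrePearson L α z c)
    (n : ℕ) :
    c * ((P (n + 1)).eval z * (P n).eval z) =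
      -(L (P (n + 1) ^ 2) + (P (n + 1)).coeff n * L (P n ^ 2)) := by
  have hsucc : L (P n * (X * derivative (P (n + 1)))) = -(P (n + 1)).coeff n * L (P n ^ 2) := by
    have hdeg := (natDegree_X_mul_derivative_le (P (n + 1))).trans_eq (hP.natDegree_eq (n + 1))
    rw [hP.map_mul_of_natDegree_le_succ hdeg, coeff_X_mul_derivative, coeff_X_mul_derivative,
      hP.coeff_self]
    push_cast
    ring
  have hself : L (P (n + 1) * (X * derivative (P n))) = 0 := by
    have hdeg := (natDegree_X_mul_derivative_le (P n)).trans_eq (hP.natDegree_eq n)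
    rw [hP.map_mul_of_natDegree_le (hdeg.trans n.le_succ), coeff_X_mul_derivative,
      hP.coeff_eq_zero n.lt_succ_self, mul_zero, zero_mul]
  have hderiv : X * derivative (P (n + 1) * P n) =
      P n * (X * derivative (P (n + 1))) + P (n + 1) * (X * derivative (P n)) := by
    rw [derivative_mul]; ring
  have hpearson := hL (P (n + 1) * P n)
  rw [hderiv, map_add, hsucc, hself, mul_left_comm, hP.map_succ_mul_X_mul,
    hP.map_mul_eq_zero n.succ_ne_self, eval_mul] at hpearson
  linear_combination -hpearson

end IsMonicOrthogonal

lemma HasThreeTermRecurrence.eval_succ (hrec : HasThreeTermRecurrence P a b) (z : R) (n : ℕ) :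
    z * (P (n + 1)).eval z =
      (P (n + 2)).eval z + b (n + 1) * (P (n + 1)).eval z + a (n + 1) * (P n).eval z := by
  simpa only [eval_add, eval_mul, eval_X, eval_C] using congrArg (eval z) (hrec.succ n)

lemma IsMonicOrthogonal.neg_two_mul_mass_mul_eval_succ_mul_eval [IsDomain R]
    (hP : IsMonicOrthogonal L P) (hrec : HasThreeTermRecurrence P a b)
    (hL : LaguerrePearson L α z c) {n : ℕ} (ha : a (n + 1) ≠ 0) :
    -2 * (c * ((P (n + 1)).eval z * (P n).eval z)) =
      (a (n + 1) - a (n + 2) - b (n + 1) * (b (n + 1) - (z + α + 2 * ((n + 1 : ℕ) + 1)))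
        - (1 + α + 2 * (n + 1 : ℕ)) * z) * L (P n ^ 2) := by
  have hsq := hP.mass_mul_eval_sq hrec hL (n + 1)
  have hmixed := hP.mass_mul_eval_succ_mul_eval hL n
  have hmixed' := hP.mass_mul_eval_succ_mul_eval hL (n + 1)
  rw [hP.map_sq_succ hrec (n + 1), hP.coeff_succ_succ hrec] at hmixed'
  rw [hP.map_sq_succ hrec n] at hsq hmixed hmixed'
  apply mul_left_cancel₀ ha
  push_cast at hsq ⊢
  linear_combination (b (n + 1) - z) * hsq + c * (P (n + 1)).eval z * hrec.eval_succ z n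
    + hmixed' - a (n + 1) * hmixed

theorem truncated_laguerre_nonlinear_general [IsDomain R] (hP : IsMonicOrthogonal L P)
    (hrec : HasThreeTermRecurrence P a b) (hL : LaguerrePearson L α z c) {n : ℕ}
    (hn : L (P (n + 1) ^ 2) ≠ 0) :
    4 * ((α - b (n + 1) + 2 * (n + 1 : ℕ) + 1) * (α - b n + 2 * (n + 1 : ℕ) - 1) * a (n + 1)) =
      (a (n + 1) - a (n + 2) - b (n + 1) * (b (n + 1) - (z + α + 2 * ((n + 1 : ℕ) + 1)))
        - (1 + α + 2 * (n + 1 : ℕ)) * z) ^ 2 := by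
  have hsucc := hP.map_sq_succ hrec n
  obtain ⟨ha, hh⟩ : a (n + 1) ≠ 0 ∧ L (P n ^ 2) ≠ 0 := mul_ne_zero_iff.mp (hsucc ▸ hn)
  have hsq := hP.mass_mul_eval_sq hrec hL n
  have hsq' := hP.mass_mul_eval_sq hrec hL (n + 1)
  have hmixed_sq := congrArg (· ^ 2) (hP.neg_two_mul_mass_mul_eval_succ_mul_eval hrec hL ha)
  rw [hsucc] at hsq'
  apply mul_left_cancel₀ (pow_ne_zero 2 hh)
  push_cast at hsq' hmixed_sq ⊢
  linear_combination hmixed_sq - 4 * c * (P (n + 1)).eval z ^ 2 * hsq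
    - 4 * (α - b n + 2 * n + 1) * L (P n ^ 2) * hsq'

end CommRing

/-- The linear functional `p ↦ ∫ x in u..v, p(x) w(x)` on polynomials given by an integrable
weight `w`. -/
noncomputable def weightFunctional {w : ℝ → ℝ} {u v : ℝ} (hw : IntervalIntegrable w volume u v) :
    ℝ[X] →ₗ[ℝ] ℝ where
  toFun p := ∫ x in u..v, p.eval x * w x
  map_add' p q := by
    simp only [eval_add, add_mul]
    exact integral_add (hw.continuousOn_mul p.continuousOn) (hw.continuousOn_mul q.continuousOn)
  map_smul' r p := by
    simp only [eval_smul, smul_eq_mul, mul_assoc, intervalIntegral.integral_const_mul,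
      RingHom.id_apply]

lemma weightFunctional_apply {w : ℝ → ℝ} {u v : ℝ} (hw : IntervalIntegrable w volume u v)
    (p : ℝ[X]) : weightFunctional hw p = ∫ x in u..v, p.eval x * w x := rfl

lemma weightFunctional_sq_pos {w : ℝ → ℝ} {u v : ℝ} (hw : IntervalIntegrable w volume u v)
    (huv : u < v) (hpos : ∀ x ∈ Set.Ioo u v, 0 < w x) {p : ℝ[X]} (hp : p ≠ 0) :
    0 < weightFunctional hw (p ^ 2) := by
  have hroots : volume {x | p.IsRoot x} = 0 := (finite_setOfPred_isRoot hp).measure_zero _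
  have hnonneg : 0 ≤ᵐ[volume.restrict (Set.uIoc u v)] fun x => (p ^ 2).eval x * w x := by
    rw [Set.uIoc_of_le huv.le, ← restrict_Ioo_eq_restrict_Ioc]
    filter_upwards [ae_restrict_mem measurableSet_Ioo] with x hx
    rw [eval_pow]
    exact mul_nonneg (sq_nonneg _) (hpos x hx).le
  have hsupport : Set.Ioo u v \ {x | p.IsRoot x} ⊆
      Function.support (fun x => (p ^ 2).eval x * w x) ∩ Set.Ioc u v := by
    rintro x ⟨hx, hroot⟩
    refine ⟨?_, Set.Ioo_subset_Ioc_self hx⟩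
    rw [Function.mem_support, eval_pow]
    exact mul_ne_zero (pow_ne_zero 2 hroot) (hpos x hx).ne'
  rw [weightFunctional_apply, integral_pos_iff_support_of_nonneg_ae' hnonneg
    (hw.continuousOn_mul (p ^ 2).continuousOn)]
  refine ⟨huv, lt_of_lt_of_le ?_ (measure_mono hsupport)⟩
  rw [measure_sdiff_null hroots]
  exact (Measure.measure_Ioo_pos _).mpr huv

lemma intervalIntegrable_rpow_mul_exp_neg {α : ℝ} (hα : -1 < α) (u v : ℝ) :
    IntervalIntegrable (fun x : ℝ => x ^ α * Real.exp (-x)) volume u v :=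
  (intervalIntegrable_rpow' hα).mul_continuousOn (by fun_prop)

/-- The truncated Laguerre functional `p ↦ ∫ x in 0..z, p(x) x ^ α exp (-x)`. -/
noncomputable def truncatedLaguerre {α : ℝ} (hα : -1 < α) (z : ℝ) : ℝ[X] →ₗ[ℝ] ℝ :=
  weightFunctional (intervalIntegrable_rpow_mul_exp_neg hα 0 z)

lemma truncatedLaguerre_sq_pos {α z : ℝ} (hα : -1 < α) (hz : 0 < z) {p : ℝ[X]} (hp : p ≠ 0) :
    0 < truncatedLaguerre hα z (p ^ 2) :=
  weightFunctional_sq_pos _ hz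
    (fun x hx => mul_pos (Real.rpow_pos_of_pos hx.1 α) (Real.exp_pos (-x))) hp

lemma hasDerivAt_eval_mul_rpow_mul_exp_neg (p : ℝ[X]) (α : ℝ) {x : ℝ} (hx : 0 < x) :
    HasDerivAt (fun x => p.eval x * (x ^ (α + 1) * Real.exp (-x)))
      ((X * derivative p - X * p + C (α + 1) * p).eval x * (x ^ α * Real.exp (-x))) x := by
  have hrpow : HasDerivAt (fun x : ℝ => x ^ (α + 1)) ((α + 1) * x ^ α) x := by
    simpa only [add_sub_cancel_right] using
      Real.hasDerivAt_rpow_const (p := α + 1) (Or.inl hx.ne')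
  refine ((p.hasDerivAt x).mul (hrpow.mul (hasDerivAt_neg x).exp)).congr_deriv ?_
  simp only [Pi.mul_apply, Real.rpow_add_one hx.ne', eval_add, eval_sub, eval_mul, eval_X, eval_C]
  ring

lemma laguerrePearson_truncatedLaguerre {α z : ℝ} (hα : -1 < α) (hz : 0 ≤ z) :
    LaguerrePearson (truncatedLaguerre hα z) α z (z ^ (α + 1) * Real.exp (-z)) := by
  intro p
  have hα' : 0 < α + 1 := neg_lt_iff_pos_add.mp hα
  have hcont : Continuous fun x : ℝ => p.eval x * (x ^ (α + 1) * Real.exp (-x)) := by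
    have := Real.continuous_rpow_const hα'.le
    fun_prop
  have hint : truncatedLaguerre hα z (X * derivative p - X * p + C (α + 1) * p) =
      p.eval z * (z ^ (α + 1) * Real.exp (-z)) - p.eval 0 * (0 ^ (α + 1) * Real.exp (-0)) :=
    integral_eq_sub_of_hasDerivAt_of_le hz hcont.continuousOn
      (fun x hx => hasDerivAt_eval_mul_rpow_mul_exp_neg p α hx.1)
      ((intervalIntegrable_rpow_mul_exp_neg hα 0 z).continuousOn_mul (Polynomial.continuousOn _))
  rw [Real.zero_rpow hα'.ne', map_add, map_sub, map_C_mul] at hint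
  linear_combination hint

/-- Nonlinear relation for the recurrence coefficients of the truncated Laguerre
polynomials (Theorem 4.4). -/
theorem truncated_laguerre_nonlinear (α z : ℝ) (hα : -1 < α) (hz : 0 < z)
    (P : ℕ → Polynomial ℝ)
    (hP_monic : ∀ n, (P n).Monic)
    (hP_deg : ∀ n, (P n).natDegree = n)
    (hP_orth : ∀ m n, m ≠ n →
      ∫ x in (0:ℝ)..z, (P m).eval x * (P n).eval x * x ^ α * Real.exp (-x) = 0)
    (a b : ℕ → ℝ)
    (ha0 : a 0 = 0)
    (hrec0 : Polynomial.X * P 0 = P 1 + Polynomial.C (b 0) * P 0)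
    (hrec : ∀ n, 1 ≤ n →
      Polynomial.X * P n = P (n + 1) + Polynomial.C (b n) * P n + Polynomial.C (a n) * P (n - 1)) :
    ∀ n : ℕ, 1 ≤ n →
      (α - b n + 2 * (n : ℝ) + 1) * (α - b (n - 1) + 2 * (n : ℝ) - 1) * a n =
        (1 / 4) * (a n - a (n + 1)
          - b n * (b n - (z + α + 2 * ((n : ℝ) + 1))) - (1 + α + 2 * (n : ℝ)) * z) ^ 2 := by
  intro n hn
  obtain ⟨m, rfl⟩ := Nat.exists_eq_add_of_le' hn
  have horth : IsMonicOrthogonal (truncatedLaguerre hα z) P :=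
    ⟨hP_monic, hP_deg, fun {m n} hmn => by
      simpa only [truncatedLaguerre, weightFunctional_apply, eval_mul, mul_assoc] using
        hP_orth m n hmn⟩
  have hrecurrence : HasThreeTermRecurrence P a b := ⟨hrec0, fun n => hrec (n + 1) n.succ_pos⟩
  have hrelation := truncated_laguerre_nonlinear_general horth hrecurrence
    (laguerrePearson_truncatedLaguerre hα hz.le)
    (truncatedLaguerre_sq_pos hα hz (hP_monic (m + 1)).ne_zero).ne'
  rw [Nat.add_sub_cancel]
  linear_combination hrelation / 4
end

section
/- For every n ≥ 2, the recurrence coefficients γ_n of the truncated generalized Hermite polynomials satisfy the Laguerre–Freud equation γ_{n+1}·(γ_{n+2} + γ_{n+1} + γ_n − (α + z + n + 2)) − γ_{n−1}·(γ_{n−2} + γ_{n−1} + γ_n − (α + z + n − 1)) − γ_n + z = 0. -/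
open MeasureTheory intervalIntegral Polynomial

/-!
The weight `w(x) = |x| ^ (2α + 1) * exp (-x²)` on `[-√z, √z]` satisfies the Pearson equation
`(φ w)' = ψ w` with `φ = x (z - x²)` and `ψ = 2z(α + 1) - 2(α + 2 + z) x² + 2x⁴`; since `φ` vanishes
at `±√z`, integration by parts gives `L (φ p' + ψ p) = 0` for every polynomial `p`.
For `p = S_n²` every term can be evaluated: the three-term recurrence expands `x² S_n` in
`S_{n+2}, S_n, S_{n-2}`, and `S_n = x^n - (γ_0 + ⋯ + γ_{n-1}) x^(n-2) + ⋯` gives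
`x S_n' = n S_n + 2 (γ_0 + ⋯ + γ_{n-1}) S_{n-2} + ⋯`.
The result is a relation involving the partial sums of `γ`; subtracting it from its successor
eliminates them.
-/

section Algebra

variable {R : Type*} [CommRing R]

lemma linearMap_C_mul (L : R[X] →ₗ[R] R) (c : R) (p : R[X]) : L (C c * p) = c * L p := by
  rw [← smul_eq_C_mul, map_smul, smul_eq_mul]

/-- `S` is the sequence of polynomials generated from `S 0 = 1` by the symmetric three-term
recurrence with coefficients `γ`. Since `γ 0 = 0`, the truncated index `0 - 1` is harmless: it
stands for `S (-1) = 0`. -/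
structure IsSymmetricRecurrence (γ : ℕ → R) (S : ℕ → R[X]) : Prop where
  zero : S 0 = 1
  gamma_zero : γ 0 = 0
  X_mul : ∀ n, X * S n = S (n + 1) + C (γ n) * S (n - 1)

namespace IsSymmetricRecurrence

variable {γ : ℕ → R} {S : ℕ → R[X]} (h : IsSymmetricRecurrence γ S)
include h

lemma succ_eq (n : ℕ) : S (n + 1) = X * S n - C (γ n) * S (n - 1) :=
  eq_sub_of_add_eq (h.X_mul n).symm

lemma coeff_succ_zero (n : ℕ) : (S (n + 1)).coeff 0 = -(γ n * (S (n - 1)).coeff 0) := by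
  simp [h.succ_eq n]

lemma coeff_succ_succ (n m : ℕ) :
    (S (n + 1)).coeff (m + 1) = (S n).coeff m - γ n * (S (n - 1)).coeff (m + 1) := by
  simp [h.succ_eq n]

lemma coeff_eq_zero_of_lt {n m : ℕ} (hnm : n < m) : (S n).coeff m = 0 := by
  induction n using Nat.strong_induction_on generalizing m with
  | _ n ih =>
    obtain ⟨m, rfl⟩ := Nat.exists_eq_add_one_of_ne_zero (Nat.ne_zero_of_lt hnm)
    cases n with
    | zero => simp [h.zero, coeff_one]
    | succ n =>
      rw [h.coeff_succ_succ, ih n (by omega) (by omega), ih (n - 1) (by omega) (by omega)]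
      simp

lemma coeff_self (n : ℕ) : (S n).coeff n = 1 := by
  induction n with
  | zero => simp [h.zero]
  | succ n ih => rw [h.coeff_succ_succ, ih, h.coeff_eq_zero_of_lt (by omega)]; simp

lemma coeff_succ_self (n : ℕ) : (S (n + 1)).coeff n = 0 := by
  induction n with
  | zero => simp [h.coeff_succ_zero, h.gamma_zero]
  | succ n ih =>
    rw [h.coeff_succ_succ, ih, Nat.add_sub_cancel, h.coeff_eq_zero_of_lt n.lt_succ_self]
    simp

lemma coeff_add_two_self (n : ℕ) :
    (S (n + 2)).coeff n = -∑ i ∈ Finset.range (n + 2), γ i := by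
  induction n with
  | zero => simp [h.coeff_succ_zero, h.zero, h.gamma_zero, Finset.sum_range_succ]
  | succ n ih =>
    rw [h.coeff_succ_succ, ih, Nat.add_succ_sub_one, h.coeff_self, Finset.sum_range_succ _ (n + 2)]
    ring

lemma degree_sub_coeff_mul_lt {n : ℕ} {p : R[X]} (hp : p.natDegree ≤ n) :
    (p - C (p.coeff n) * S n).degree < n := by
  refine (degree_lt_iff_coeff_zero _ _).2 fun m hm => ?_
  rw [coeff_sub, coeff_C_mul]
  obtain rfl | hm := hm.eq_or_lt
  · simp [h.coeff_self]
  · simp [h.coeff_eq_zero_of_lt hm, natDegree_le_iff_coeff_eq_zero.1 hp m hm]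

lemma natDegree_X_mul_derivative_le (n : ℕ) : (X * derivative (S n)).natDegree ≤ n :=
  natDegree_le_iff_coeff_eq_zero.2 fun m hm => by
    rw [coeff_X_mul_derivative, h.coeff_eq_zero_of_lt hm, mul_zero]

lemma natDegree_X_mul_derivative_sub_le (n : ℕ) :
    (X * derivative (S (n + 2)) - C (n + 2 : R) * S (n + 2)).natDegree ≤ n := by
  refine natDegree_le_iff_coeff_eq_zero.2 fun m hm => ?_
  rw [coeff_sub, coeff_X_mul_derivative, coeff_C_mul]
  obtain rfl | rfl | hm : m = n + 1 ∨ m = n + 2 ∨ n + 2 < m := by omega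
  · simp [h.coeff_succ_self (n + 1)]
  · simp
  · simp [h.coeff_eq_zero_of_lt hm]

lemma X_sq_mul (n : ℕ) :
    X ^ 2 * S n =
      S (n + 2) + C (γ n + γ (n + 1)) * S n + C (γ n * γ (n - 1)) * S (n - 2) := by
  have hpred : C (γ n) * S (n - 1 + 1) = C (γ n) * S n := by
    cases n with
    | zero => simp [h.gamma_zero]
    | succ n => rfl
  have hsucc := h.X_mul (n + 1)
  rw [Nat.add_sub_cancel] at hsucc
  rw [C_add, C_mul]
  linear_combination X * h.X_mul n + hsucc + C (γ n) * h.X_mul (n - 1) + hpred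

end IsSymmetricRecurrence

/-- The polynomials `S` of a symmetric three-term recurrence are orthogonal with respect to the
linear functional `L`; `L` may be degenerate, that is, `L (S n * S n)` may vanish. -/
structure IsSymmetricOrthogonal (L : R[X] →ₗ[R] R) (γ : ℕ → R) (S : ℕ → R[X]) : Prop
    extends IsSymmetricRecurrence γ S where
  orthogonal : ∀ m n, m ≠ n → L (S m * S n) = 0

/-- The Pearson equation `(φ L)' = ψ L` of a semiclassical linear functional `L`, in the weak sense:
by duality, the left side takes the value `-L (φ * p')` at a polynomial `p`. -/
def SatisfiesPearson (L : R[X] →ₗ[R] R) (φ ψ : R[X]) : Prop :=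
  ∀ p, L (φ * derivative p + ψ * p) = 0

namespace IsSymmetricOrthogonal

variable {L : R[X] →ₗ[R] R} {γ : ℕ → R} {S : ℕ → R[X]} (h : IsSymmetricOrthogonal L γ S)
include h

lemma map_mul_eq_zero_of_degree_lt {n : ℕ} {p : R[X]} (hp : p.degree < n) :
    L (p * S n) = 0 := by
  suffices key : ∀ d ≤ n, ∀ q : R[X], q.degree < d → L (q * S n) = 0 from key n le_rfl p hp
  intro d
  induction d with
  | zero =>
    intro _ q hq
    have hq_zero : q = 0 := by simpa using hq
    rw [hq_zero, zero_mul, map_zero]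
  | succ d ih =>
    intro hd q hq
    have hremainder := ih (by omega) _ <|
      h.degree_sub_coeff_mul_lt <| natDegree_le_of_degree_le <| Order.le_of_lt_succ hq
    rwa [sub_mul, mul_assoc, map_sub, linearMap_C_mul, h.orthogonal d n (by omega), mul_zero,
      sub_zero] at hremainder

lemma map_mul_eq_coeff_mul {n : ℕ} {p : R[X]} (hp : p.natDegree ≤ n) :
    L (p * S n) = p.coeff n * L (S n * S n) := by
  have hzero := h.map_mul_eq_zero_of_degree_lt (h.degree_sub_coeff_mul_lt hp)
  rwa [sub_mul, mul_assoc, map_sub, linearMap_C_mul, sub_eq_zero] at hzero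

lemma map_succ_mul_succ (n : ℕ) :
    L (S (n + 1) * S (n + 1)) = γ (n + 1) * L (S n * S n) := by
  have hleft : L (X * S n * S (n + 1)) = L (S (n + 1) * S (n + 1)) := by
    rw [h.X_mul, add_mul, mul_assoc, map_add, linearMap_C_mul, h.orthogonal (n - 1) _ (by omega)]
    simp
  have hright : L (X * S (n + 1) * S n) = γ (n + 1) * L (S n * S n) := by
    rw [h.X_mul, add_mul, mul_assoc, map_add, linearMap_C_mul,
      h.orthogonal (n + 1 + 1) _ (by omega)]
    simp
  rw [← hleft, ← hright, mul_right_comm]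

lemma map_mul_X_sq_mul (p : R[X]) (n : ℕ) :
    L (p * (X ^ 2 * S n)) =
      L (p * S (n + 2)) + (γ n + γ (n + 1)) * L (p * S n)
        + γ n * γ (n - 1) * L (p * S (n - 2)) := by
  rw [h.X_sq_mul, mul_add, mul_add, mul_left_comm p (C _), mul_left_comm p (C _), map_add, map_add,
    linearMap_C_mul, linearMap_C_mul]

lemma map_mul_X_sq_mul_self (n : ℕ) :
    L (S n * (X ^ 2 * S n)) = (γ n + γ (n + 1)) * L (S n * S n) := by
  have hlow : γ n * γ (n - 1) * L (S n * S (n - 2)) = 0 := by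
    cases n with
    | zero => simp [h.gamma_zero]
    | succ n => rw [h.orthogonal _ _ (by omega), mul_zero]
  rw [h.map_mul_X_sq_mul, h.orthogonal n (n + 2) (by omega), hlow]
  ring

lemma map_X_sq_mul_mul_X_sq_mul (n : ℕ) :
    L (X ^ 2 * S n * (X ^ 2 * S n)) =
      (γ (n + 1) * γ (n + 2) + (γ n + γ (n + 1)) ^ 2 + γ n * γ (n - 1)) * L (S n * S n) := by
  have hswap (m : ℕ) : L (X ^ 2 * S n * S m) = L (S n * (X ^ 2 * S m)) :=
    congrArg L (by ring)
  have hhigh (m : ℕ) : L (S m * (X ^ 2 * S (m + 2))) = L (S (m + 2) * S (m + 2)) := by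
    rw [h.map_mul_X_sq_mul, h.orthogonal m _ (by omega), h.orthogonal m _ (by omega),
      h.map_succ_mul_succ, h.map_succ_mul_succ]
    simp [mul_assoc]
  have hup : L (X ^ 2 * S n * S (n + 2)) = L (S (n + 2) * S (n + 2)) := by
    rw [hswap, hhigh]
  have hlow : γ n * γ (n - 1) * L (X ^ 2 * S n * S (n - 2)) = γ n * γ (n - 1) * L (S n * S n) := by
    match n with
    | 0 => simp [h.gamma_zero]
    | 1 => simp [h.gamma_zero]
    | m + 2 => rw [Nat.add_sub_cancel, mul_comm (X ^ 2 * _), hhigh]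
  rw [h.map_mul_X_sq_mul, hup, hlow, hswap, h.map_mul_X_sq_mul_self, h.map_succ_mul_succ,
    h.map_succ_mul_succ]
  ring

lemma map_X_mul_derivative_mul_self (n : ℕ) :
    L (X * derivative (S n) * S n) = n * L (S n * S n) := by
  rw [h.map_mul_eq_coeff_mul (h.natDegree_X_mul_derivative_le n), coeff_X_mul_derivative,
    h.coeff_self, mul_one]

lemma map_X_mul_derivative_mul_sub_two (n : ℕ) :
    L (X * derivative (S (n + 2)) * S n) =
      2 * (∑ i ∈ Finset.range (n + 2), γ i) * L (S n * S n) := by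
  have hproj := h.map_mul_eq_coeff_mul (h.natDegree_X_mul_derivative_sub_le n)
  rw [sub_mul, mul_assoc (C _), map_sub, linearMap_C_mul, h.orthogonal (n + 2) n (by omega),
    mul_zero, sub_zero, coeff_sub, coeff_X_mul_derivative, coeff_C_mul,
    h.coeff_add_two_self] at hproj
  rw [hproj]
  ring

lemma map_X_mul_derivative_mul_X_sq_mul (n : ℕ) :
    L (X * derivative (S n) * (X ^ 2 * S n)) =
      (n * (γ n + γ (n + 1)) + 2 * ∑ i ∈ Finset.range n, γ i) * L (S n * S n) := by
  have hup : L (X * derivative (S n) * S (n + 2)) = 0 := by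
    rw [h.map_mul_eq_coeff_mul ((h.natDegree_X_mul_derivative_le n).trans (by omega)),
      coeff_X_mul_derivative, h.coeff_eq_zero_of_lt (by omega)]
    simp
  have hlow : γ n * γ (n - 1) * L (X * derivative (S n) * S (n - 2)) =
      2 * (∑ i ∈ Finset.range n, γ i) * L (S n * S n) := by
    match n with
    | 0 => simp [h.gamma_zero]
    | 1 => simp [h.gamma_zero]
    | m + 2 =>
      rw [Nat.add_sub_cancel, h.map_X_mul_derivative_mul_sub_two, h.map_succ_mul_succ,
        h.map_succ_mul_succ, Nat.add_succ_sub_one]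
      ring
  rw [h.map_mul_X_sq_mul, hup, hlow, h.map_X_mul_derivative_mul_self]
  ring

variable [NoZeroDivisors R] [NeZero (2 : R)] (hS : ∀ n, L (S n * S n) ≠ 0) {α z : R}
  (hL : SatisfiesPearson L (X * (C z - X ^ 2))
    (C (2 * z * (α + 1)) - C (2 * (α + 2 + z)) * X ^ 2 + C 2 * X ^ 4))
include hS hL

lemma laguerre_freud_sum (n : ℕ) :
    z * (n + α + 1) - (n + α + 2 + z) * (γ n + γ (n + 1)) - 2 * ∑ i ∈ Finset.range n, γ i
      + γ (n + 1) * γ (n + 2) + (γ n + γ (n + 1)) ^ 2 + γ n * γ (n - 1) = 0 := by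
  have hexpand : X * (C z - X ^ 2) * derivative (S n * S n)
      + (C (2 * z * (α + 1)) - C (2 * (α + 2 + z)) * X ^ 2 + C 2 * X ^ 4) * (S n * S n)
      = C (2 * z) * (X * derivative (S n) * S n) - C 2 * (X * derivative (S n) * (X ^ 2 * S n))
        + C (2 * z * (α + 1)) * (S n * S n) - C (2 * (α + 2 + z)) * (S n * (X ^ 2 * S n))
        + C 2 * (X ^ 2 * S n * (X ^ 2 * S n)) := by
    rw [derivative_mul, C_mul (a := 2) (b := z), C_ofNat]
    ring
  have hpearson := hL (S n * S n)
  rw [hexpand] at hpearson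
  simp only [map_add, map_sub, linearMap_C_mul, h.map_mul_X_sq_mul_self,
    h.map_X_sq_mul_mul_X_sq_mul, h.map_X_mul_derivative_mul_self,
    h.map_X_mul_derivative_mul_X_sq_mul] at hpearson
  refine (mul_eq_zero.1 ?_).resolve_left (mul_ne_zero (NeZero.ne (2 : R)) (hS n))
  linear_combination hpearson

theorem laguerre_freud (n : ℕ) :
    γ (n + 2) * (γ (n + 3) + γ (n + 2) + γ (n + 1) - (α + z + n + 3))
      - γ n * (γ (n - 1) + γ n + γ (n + 1) - (α + z + n)) - γ (n + 1) + z = 0 := by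
  have hn := h.laguerre_freud_sum hS hL n
  have hsucc := h.laguerre_freud_sum hS hL (n + 1)
  rw [Finset.sum_range_succ, Nat.add_sub_cancel] at hsucc
  push_cast at hsucc
  linear_combination hsucc - hn

end IsSymmetricOrthogonal

end Algebra

section AbsRpow

variable {r : ℝ}

lemma intervalIntegrable_abs_rpow (hr : -1 < r) (a b : ℝ) :
    IntervalIntegrable (fun x => |x| ^ r) volume a b := by
  refine intervalIntegrable_of_even (fun x => by rw [abs_neg]) fun x hx => ?_
  refine (intervalIntegrable_rpow' hr).congr fun t ht => ?_
  rw [Set.uIoc_of_le hx.le] at ht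
  simp only [abs_of_pos ht.1]

-- Up to a factor, `x * |x| ^ r` is the derivative of the `C¹` function `|x| ^ (r + 2)`.
lemma continuous_mul_abs_rpow (hr : -1 < r) : Continuous fun x : ℝ => x * |x| ^ r := by
  have hderiv : deriv (fun x : ℝ => |x| ^ (r + 2)) = fun x => (r + 2) * (x * |x| ^ r) := by
    funext x
    rw [(hasDerivAt_abs_rpow x (by linarith)).deriv, add_sub_cancel_right]
    ring
  have hC1 : ContDiff ℝ 1 fun x : ℝ => |x| ^ (r + 2) := by
    simpa using contDiff_norm_rpow (E := ℝ) (p := r + 2) (by linarith)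
  have hcont := (hC1.continuous_deriv le_rfl).const_mul (r + 2)⁻¹
  rw [hderiv] at hcont
  simpa [show r + 2 ≠ 0 by linarith] using hcont

lemma hasDerivAt_mul_abs_rpow (r : ℝ) {x : ℝ} (hx : x ≠ 0) :
    HasDerivAt (fun x => x * |x| ^ r) ((r + 1) * |x| ^ r) x := by
  have habs : |x| ≠ 0 := abs_ne_zero.2 hx
  refine ((hasDerivAt_id x).mul
    ((hasDerivAt_abs hx).rpow_const (p := r) (Or.inl habs))).congr_deriv ?_
  have hsign : (SignType.sign x : ℝ) * x = |x| := sign_mul_self x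
  rw [Real.rpow_sub_one habs, id]
  field_simp
  linear_combination r * hsign

lemma integral_mul_deriv_add_mul_abs_rpow (hr : -1 < r) {g g' : ℝ → ℝ}
    (hg : ∀ x, HasDerivAt g (g' x) x) (hg' : Continuous g') (a b : ℝ) :
    ∫ x in a..b, (x * g' x + (r + 1) * g x) * |x| ^ r =
      b * |b| ^ r * g b - a * |a| ^ r * g a := by
  have hg_cont : Continuous g := continuous_iff_continuousAt.2 fun x => (hg x).continuousAt
  refine integral_eq_of_hasDerivAt_off_countable (fun x => x * |x| ^ r * g x) _
    (Set.countable_singleton 0) ((continuous_mul_abs_rpow hr).mul hg_cont).continuousOn ?_ ?_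
  · intro x hx
    refine ((hasDerivAt_mul_abs_rpow r hx.2).mul (hg x)).congr_deriv ?_
    ring
  · exact (intervalIntegrable_abs_rpow hr a b).continuousOn_mul (by fun_prop)

end AbsRpow

lemma ae_eval_ne_zero {p : ℝ[X]} (hp : p ≠ 0) : ∀ᵐ x : ℝ, p.eval x ≠ 0 := by
  simpa [ae_iff] using (finite_setOfPred_isRoot hp).measure_zero volume

lemma intervalIntegral_pos_of_ae_pos {f : ℝ → ℝ} {a b : ℝ} (hab : a < b)
    (hf : IntervalIntegrable f volume a b) (hpos : ∀ᵐ x, 0 < f x) : 0 < ∫ x in a..b, f x := by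
  refine (integral_pos_iff_support_of_nonneg_ae (hpos.mono fun _ => le_of_lt) hf).2 ⟨hab, ?_⟩
  have hsupport : Function.support f =ᵐ[volume] Set.univ :=
    Filter.eventuallyEq_univ.2 (hpos.mono fun _ => ne_of_gt)
  rw [measure_congr (hsupport.inter (ae_eq_refl (Set.Ioc a b))), Set.univ_inter, Real.volume_Ioc]
  simpa using hab

section TruncatedHermite

variable {α : ℝ} (hα : -1 < α)
include hα

lemma intervalIntegrable_eval_mul_hermite_weight (p : ℝ[X]) (a b : ℝ) :
    IntervalIntegrable (fun x => p.eval x * |x| ^ (2 * α + 1) * Real.exp (-x ^ 2)) volume a b :=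
  ((intervalIntegrable_abs_rpow (by linarith) a b).continuousOn_mul
    p.continuous.continuousOn).mul_continuousOn (by fun_prop)

/-- The truncated generalized Hermite functional, integration over `[-√z, √z]` against
`|x| ^ (2α + 1) * exp (-x²)`. The proof of `-1 < α` is an argument because linearity rests on the
integrability of the weight at `0`. -/
noncomputable def truncatedHermite (z : ℝ) : ℝ[X] →ₗ[ℝ] ℝ where
  toFun p := ∫ x in (-√z)..√z, p.eval x * |x| ^ (2 * α + 1) * Real.exp (-x ^ 2)
  map_add' p q := by
    rw [← intervalIntegral.integral_add (intervalIntegrable_eval_mul_hermite_weight hα p _ _)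
      (intervalIntegrable_eval_mul_hermite_weight hα q _ _)]
    simp only [eval_add, add_mul]
  map_smul' c p := by
    simp only [eval_smul, smul_eq_mul, mul_assoc, intervalIntegral.integral_const_mul,
      RingHom.id_apply]

lemma truncatedHermite_apply (z : ℝ) (p : ℝ[X]) : truncatedHermite hα z p =
    ∫ x in (-√z)..√z, p.eval x * |x| ^ (2 * α + 1) * Real.exp (-x ^ 2) := rfl

lemma truncatedHermite_mul_self_pos {z : ℝ} (hz : 0 < z) {p : ℝ[X]} (hp : p ≠ 0) :
    0 < truncatedHermite hα z (p * p) := by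
  refine intervalIntegral_pos_of_ae_pos (neg_lt_self (Real.sqrt_pos.2 hz))
    (intervalIntegrable_eval_mul_hermite_weight hα _ _ _) ?_
  filter_upwards [ae_eval_ne_zero hp, Measure.ae_ne volume 0] with x hpx hx
  have hsq : 0 < p.eval x * p.eval x := mul_self_pos.2 hpx
  rw [eval_mul]
  positivity

lemma truncatedHermite_satisfiesPearson {z : ℝ} (hz : 0 ≤ z) :
    SatisfiesPearson (truncatedHermite hα z) (X * (C z - X ^ 2))
      (C (2 * z * (α + 1)) - C (2 * (α + 2 + z)) * X ^ 2 + C 2 * X ^ 4) := by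
  intro p
  have hderiv (x : ℝ) : HasDerivAt (fun x => ((C z - X ^ 2) * p).eval x * Real.exp (-x ^ 2))
      ((derivative ((C z - X ^ 2) * p)).eval x * Real.exp (-x ^ 2)
        + ((C z - X ^ 2) * p).eval x * (Real.exp (-x ^ 2) * -(2 * x))) x := by
    refine (Polynomial.hasDerivAt _ x).mul (HasDerivAt.exp ?_)
    simpa using (hasDerivAt_pow 2 x).fun_neg
  have hparts := integral_mul_deriv_add_mul_abs_rpow (r := 2 * α + 1) (by linarith) hderiv
    (by fun_prop) (-√z) √z
  have hvanish : (√z) ^ 2 = z := Real.sq_sqrt hz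
  simp only [eval_mul, eval_sub, eval_C, eval_pow, eval_X, neg_sq, hvanish, sub_self, zero_mul,
    mul_zero] at hparts
  rw [truncatedHermite_apply, ← hparts]
  congr 1
  funext x
  simp only [map_mul, map_add, map_one, eval_add, eval_mul, eval_X, eval_sub, eval_C, eval_pow,
    eval_one, derivative_mul, derivative_sub, derivative_C, derivative_X_pow_succ, Nat.cast_one,
    pow_one, zero_sub, eval_neg]
  ring

end TruncatedHermite

/-- Laguerre–Freud equation for the recurrence coefficients of the truncated generalized
Hermite polynomials. -/
theorem truncated_hermite_laguerre_freud (α z : ℝ) (hα : -1 < α) (hz : 0 < z)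
    (S : ℕ → Polynomial ℝ)
    (hS_monic : ∀ n, (S n).Monic)
    (hS_deg : ∀ n, (S n).natDegree = n)
    (hS_orth : ∀ m n, m ≠ n →
      ∫ x in (-(Real.sqrt z))..(Real.sqrt z),
        (S m).eval x * (S n).eval x * |x| ^ (2 * α + 1) * Real.exp (-x ^ 2) = 0)
    (γ : ℕ → ℝ)
    (hγ0 : γ 0 = 0)
    (hrec0 : Polynomial.X * S 0 = S 1)
    (hrec : ∀ n, 1 ≤ n →
      Polynomial.X * S n = S (n + 1) + Polynomial.C (γ n) * S (n - 1)) :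
    ∀ n : ℕ, 2 ≤ n →
      γ (n + 1) * (γ (n + 2) + γ (n + 1) + γ n - (α + z + (n : ℝ) + 2))
        - γ (n - 1) * (γ (n - 2) + γ (n - 1) + γ n - (α + z + (n : ℝ) - 1))
        - γ n + z = 0 := by
  have hS_zero : S 0 = 1 := (hS_monic 0).natDegree_eq_zero.1 (hS_deg 0)
  have hX_mul (n : ℕ) : X * S n = S (n + 1) + C (γ n) * S (n - 1) := by
    rcases Nat.eq_zero_or_pos n with rfl | hn
    · simpa [hγ0] using hrec0
    · exact hrec n hn
  have hS : IsSymmetricOrthogonal (truncatedHermite hα z) γ S :=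
    { zero := hS_zero
      gamma_zero := hγ0
      X_mul := hX_mul
      orthogonal := fun m n hmn => by simpa [truncatedHermite_apply] using hS_orth m n hmn }
  have hS_norm (n : ℕ) : truncatedHermite hα z (S n * S n) ≠ 0 :=
    (truncatedHermite_mul_self_pos hα hz (hS_monic n).ne_zero).ne'
  intro n hn
  obtain ⟨n, rfl⟩ := Nat.exists_eq_add_one_of_ne_zero (show n ≠ 0 by omega)
  have key := hS.laguerre_freud hS_norm (truncatedHermite_satisfiesPearson hα hz.le) n
  rw [Nat.add_sub_cancel, show n + 1 - 2 = n - 1 by omega]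
  push_cast
  linear_combination key
end
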